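/- Let q ≥ 2 and π be a permutation of {0,…,q−1}. Then 0 is not a periodic point of the rotated odometer F_π, and for every non-periodic point x ∈ [0,1) the closure in [0,1) of the forward orbit {F_π^n(0) : n ≥ 0} is contained in the closure in [0,1) of the forward orbit {F_π^n(x) : n ≥ 0}. (This expresses that the aperiodic subsystem (I_np, F_π) has a unique minimal subsystem, and that this minimal subsystem contains 0.) -/

import Mathlib

open Classical in
/-- The von Neumann–Kakutani map `a : [0,1) → [0,1)`:
for `x ∈ [1 - 2^{1-n}, 1 - 2^{-n})`, `n ≥ 1`, `a x = x - 1 + 2^{1-n} + 2^{-n} = x - 1 + 3·2^{-n}`.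
Here `Nat.find h` is the least `n` with `x < 1 - 2^{-n}`, which for `x ∈ [0,1)` is exactly
the unique `n ≥ 1` with `1 - 2^{1-n} ≤ x < 1 - 2^{-n}`. -/
noncomputable def vnk (x : ℝ) : ℝ :=
  if h : ∃ n : ℕ, x < 1 - (2 : ℝ)⁻¹ ^ n then
    x - 1 + 3 * (2 : ℝ)⁻¹ ^ (Nat.find h)
  else 0

open Classical in
/-- The finite interval exchange `R_π : [0,1) → [0,1)` determined by a permutation `π` of
`{0,…,q-1}`: `R_π x = x + (π i - i)/q` for `x ∈ [i/q, (i+1)/q)`. -/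
noncomputable def rotPerm (q : ℕ) (π : Equiv.Perm (Fin q)) (x : ℝ) : ℝ :=
  if h : ∃ i : Fin q, x ∈ Set.Ico (((i : ℕ) : ℝ) / q) ((((i : ℕ) : ℝ) + 1) / q) then
    x + ((((π h.choose : Fin q) : ℕ) : ℝ) - (((h.choose : Fin q) : ℕ) : ℝ)) / q
  else x

/-- The rotated odometer `F_π = a ∘ R_π`. -/
noncomputable def rotOdo (q : ℕ) (π : Equiv.Perm (Fin q)) (x : ℝ) : ℝ :=
  vnk (rotPerm q π x)

/-- existence of the dyadic index -/
lemma vnk_index {x : ℝ} (hx : x ∈ Set.Ico (0 : ℝ) 1) :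
    ∃ m : ℕ, 1 - (2 : ℝ)⁻¹ ^ m ≤ x ∧ x < 1 - (2 : ℝ)⁻¹ ^ (m + 1) := by
  classical
  have h : ∃ n : ℕ, x < 1 - (2 : ℝ)⁻¹ ^ n := by
    obtain ⟨n, hn⟩ := exists_pow_lt_of_lt_one (sub_pos.2 hx.2)
      (show (2 : ℝ)⁻¹ < 1 by norm_num)
    exact ⟨n, by linarith⟩
  have h0 := Nat.find_spec h
  have hne : Nat.find h ≠ 0 := by
    intro h1
    rw [h1] at h0
    have := hx.1
    norm_num at h0
    linarith
  obtain ⟨m, hm⟩ := Nat.exists_eq_succ_of_ne_zero hne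
  refine ⟨m, ?_, ?_⟩
  · have := Nat.find_min h (m := m) (by omega)
    exact not_lt.1 this
  · rw [hm] at h0
    exact h0

lemma half_pow_anti {m n : ℕ} (h : m ≤ n) : (2 : ℝ)⁻¹ ^ n ≤ (2 : ℝ)⁻¹ ^ m :=
  pow_le_pow_of_le_one (by norm_num) (by norm_num) h

/-- the value of the von Neumann–Kakutani map -/
lemma vnk_value {x : ℝ} {m : ℕ} (h1 : 1 - (2 : ℝ)⁻¹ ^ m ≤ x)
    (h2 : x < 1 - (2 : ℝ)⁻¹ ^ (m + 1)) :
    vnk x = x - 1 + 3 * (2 : ℝ)⁻¹ ^ (m + 1) := by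
  classical
  have h : ∃ n : ℕ, x < 1 - (2 : ℝ)⁻¹ ^ n := ⟨_, h2⟩
  have hf : Nat.find h = m + 1 := by
    rw [Nat.find_eq_iff]
    refine ⟨h2, fun n hn hlt => ?_⟩
    have := half_pow_anti (show n ≤ m by omega)
    linarith
  unfold vnk
  rw [dif_pos h]
  have : @Nat.find _ (fun a => Classical.propDecidable _) h = m + 1 := by
    convert hf
  rw [this]

lemma vnk_range {x : ℝ} {m : ℕ} (h1 : 1 - (2 : ℝ)⁻¹ ^ m ≤ x)
    (h2 : x < 1 - (2 : ℝ)⁻¹ ^ (m + 1)) :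
    (2 : ℝ)⁻¹ ^ (m + 1) ≤ vnk x ∧ vnk x < (2 : ℝ)⁻¹ ^ m := by
  rw [vnk_value h1 h2]
  rw [pow_succ] at *
  constructor <;> linarith

lemma vnk_pos {x : ℝ} (hx : x ∈ Set.Ico (0 : ℝ) 1) : 0 < vnk x ∧ vnk x < 1 := by
  obtain ⟨m, h1, h2⟩ := vnk_index hx
  obtain ⟨h3, h4⟩ := vnk_range h1 h2
  have h5 : (0 : ℝ) < (2 : ℝ)⁻¹ ^ (m + 1) := by positivity
  have h6 := half_pow_anti (Nat.zero_le m)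
  rw [pow_zero] at h6
  exact ⟨by linarith, by linarith⟩

lemma vnk_injOn : Set.InjOn vnk (Set.Ico (0 : ℝ) 1) := by
  intro x hx y hy hxy
  obtain ⟨m, h1, h2⟩ := vnk_index hx
  obtain ⟨n, k1, k2⟩ := vnk_index hy
  obtain ⟨h3, h4⟩ := vnk_range h1 h2
  obtain ⟨k3, k4⟩ := vnk_range k1 k2
  rcases lt_trichotomy m n with h | h | h
  · have := half_pow_anti (show m + 1 ≤ n from h)
    linarith
  · subst h
    rw [vnk_value h1 h2, vnk_value k1 k2] at hxy
    linarith
  · have := half_pow_anti (show n + 1 ≤ m from h)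
    linarith

lemma rot_index {q : ℕ} (hq : 2 ≤ q) {x : ℝ} (hx : x ∈ Set.Ico (0 : ℝ) 1) :
    ∃ i : Fin q, x ∈ Set.Ico (((i : ℕ) : ℝ) / q) ((((i : ℕ) : ℝ) + 1) / q) := by
  have hq0 : (0 : ℝ) < q := by positivity
  have hnn : 0 ≤ x * q := mul_nonneg hx.1 hq0.le
  have hlt : ⌊x * q⌋₊ < q := by
    rw [Nat.floor_lt hnn]
    nlinarith [hx.2]
  refine ⟨⟨⌊x * q⌋₊, hlt⟩, ?_, ?_⟩
  · rw [div_le_iff₀ hq0]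
    exact Nat.floor_le hnn
  · rw [lt_div_iff₀ hq0]
    exact Nat.lt_floor_add_one _

lemma rot_index_unique {q : ℕ} (hq : 2 ≤ q) {x : ℝ} {i j : Fin q}
    (hi : x ∈ Set.Ico (((i : ℕ) : ℝ) / q) ((((i : ℕ) : ℝ) + 1) / q))
    (hj : x ∈ Set.Ico (((j : ℕ) : ℝ) / q) ((((j : ℕ) : ℝ) + 1) / q)) : i = j := by
  have hq0 : (0 : ℝ) < q := by positivity
  obtain ⟨a, b⟩ := hi
  obtain ⟨c, d⟩ := hj
  rw [div_le_iff₀ hq0] at a c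
  rw [lt_div_iff₀ hq0] at b d
  have h1 : ((i : ℕ) : ℝ) < ((j : ℕ) : ℝ) + 1 := by linarith
  have h2 : ((j : ℕ) : ℝ) < ((i : ℕ) : ℝ) + 1 := by linarith
  norm_cast at h1 h2
  apply Fin.ext
  omega

lemma rot_value {q : ℕ} (hq : 2 ≤ q) (π : Equiv.Perm (Fin q)) {x : ℝ} {i : Fin q}
    (hi : x ∈ Set.Ico (((i : ℕ) : ℝ) / q) ((((i : ℕ) : ℝ) + 1) / q)) :
    rotPerm q π x = x + ((((π i : Fin q) : ℕ) : ℝ) - ((i : ℕ) : ℝ)) / q := by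
  have h : ∃ i : Fin q, x ∈ Set.Ico (((i : ℕ) : ℝ) / q) ((((i : ℕ) : ℝ) + 1) / q) := ⟨i, hi⟩
  unfold rotPerm
  rw [dif_pos h, rot_index_unique hq h.choose_spec hi]

lemma rot_range {q : ℕ} (hq : 2 ≤ q) (π : Equiv.Perm (Fin q)) {x : ℝ} {i : Fin q}
    (hi : x ∈ Set.Ico (((i : ℕ) : ℝ) / q) ((((i : ℕ) : ℝ) + 1) / q)) :
    rotPerm q π x ∈ Set.Ico (((π i : ℕ) : ℝ) / q) ((((π i : ℕ) : ℝ) + 1) / q) := by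
  rw [rot_value hq π hi]
  obtain ⟨a, b⟩ := hi
  rw [add_div] at b
  constructor
  · rw [sub_div]; linarith
  · rw [sub_div, add_div]; linarith

lemma rot_mapsTo {q : ℕ} (hq : 2 ≤ q) (π : Equiv.Perm (Fin q)) :
    Set.MapsTo (rotPerm q π) (Set.Ico (0 : ℝ) 1) (Set.Ico (0 : ℝ) 1) := by
  intro x hx
  have hq0 : (0 : ℝ) < q := by positivity
  obtain ⟨i, hi⟩ := rot_index hq hx
  obtain ⟨a, b⟩ := rot_range hq π hi
  have h1 : (0 : ℝ) ≤ ((π i : ℕ) : ℝ) / q := by positivity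
  have h2 : (((π i : ℕ) : ℝ) + 1) / q ≤ 1 := by
    rw [div_le_one hq0]
    exact_mod_cast (π i).2
  exact ⟨by linarith, by linarith⟩

lemma rot_injOn {q : ℕ} (hq : 2 ≤ q) (π : Equiv.Perm (Fin q)) :
    Set.InjOn (rotPerm q π) (Set.Ico (0 : ℝ) 1) := by
  intro x hx y hy hxy
  obtain ⟨i, hi⟩ := rot_index hq hx
  obtain ⟨j, hj⟩ := rot_index hq hy
  have h1 := rot_range hq π hi
  have h2 := rot_range hq π hj
  rw [hxy] at h1
  have h3 : i = j := π.injective (rot_index_unique hq h1 h2)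
  subst h3
  rw [rot_value hq π hi, rot_value hq π hj] at hxy
  linarith

lemma odo_pos {q : ℕ} (hq : 2 ≤ q) (π : Equiv.Perm (Fin q)) {x : ℝ}
    (hx : x ∈ Set.Ico (0 : ℝ) 1) : 0 < rotOdo q π x ∧ rotOdo q π x < 1 :=
  vnk_pos (rot_mapsTo hq π hx)

lemma odo_mapsTo {q : ℕ} (hq : 2 ≤ q) (π : Equiv.Perm (Fin q)) :
    Set.MapsTo (rotOdo q π) (Set.Ico (0 : ℝ) 1) (Set.Ico (0 : ℝ) 1) :=
  fun _ hx => ⟨(odo_pos hq π hx).1.le, (odo_pos hq π hx).2⟩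

lemma odo_injOn {q : ℕ} (hq : 2 ≤ q) (π : Equiv.Perm (Fin q)) :
    Set.InjOn (rotOdo q π) (Set.Ico (0 : ℝ) 1) :=
  vnk_injOn.comp (rot_injOn hq π) (rot_mapsTo hq π)

/-- `F` is locally a translation to the right of each point. -/
lemma odo_right {q : ℕ} (hq : 2 ≤ q) (π : Equiv.Perm (Fin q)) {x : ℝ}
    (hx : x ∈ Set.Ico (0 : ℝ) 1) :
    ∃ δ > 0, ∀ t, 0 ≤ t → t < δ → rotOdo q π (x + t) = rotOdo q π x + t := by
  obtain ⟨i, hi⟩ := rot_index hq hx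
  have hv := rot_value hq π hi
  obtain ⟨m, h1, h2⟩ := vnk_index (rot_mapsTo hq π hx)
  refine ⟨min ((((i : ℕ) : ℝ) + 1) / q - x) (1 - (2 : ℝ)⁻¹ ^ (m + 1) - rotPerm q π x),
    lt_min (sub_pos.2 hi.2) (sub_pos.2 h2), fun t ht0 ht => ?_⟩
  have ht1 := lt_of_lt_of_le ht (min_le_left _ _)
  have ht2 := lt_of_lt_of_le ht (min_le_right _ _)
  have hr : rotPerm q π (x + t) = rotPerm q π x + t := by
    rw [rot_value hq π (x := x + t) (i := i) ⟨by linarith [hi.1], by linarith⟩, hv]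
    ring
  unfold rotOdo
  rw [hr, vnk_value h1 h2, vnk_value (m := m) (by linarith) (by linarith)]
  ring

lemma odo_iter_right {q : ℕ} (hq : 2 ≤ q) (π : Equiv.Perm (Fin q)) (n : ℕ) :
    ∃ δ > 0, ∀ t, 0 ≤ t → t < δ → (rotOdo q π)^[n] t = (rotOdo q π)^[n] 0 + t := by
  induction n with
  | zero => exact ⟨1, one_pos, fun t _ _ => by simp⟩
  | succ n ih =>
    obtain ⟨δ, hδ, h⟩ := ih
    have h0 : (0 : ℝ) ∈ Set.Ico (0 : ℝ) 1 := ⟨le_rfl, one_pos⟩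
    obtain ⟨δ', hδ', h'⟩ := odo_right hq π ((odo_mapsTo hq π).iterate n h0)
    refine ⟨min δ δ', lt_min hδ hδ', fun t ht0 ht => ?_⟩
    rw [Function.iterate_succ_apply', Function.iterate_succ_apply',
      h t ht0 (lt_of_lt_of_le ht (min_le_left _ _)),
      h' t ht0 (lt_of_lt_of_le ht (min_le_right _ _))]

/-- Displacement is in a lattice if the image avoids `[0, 2^{-N})`. -/
lemma odo_step {q : ℕ} (hq : 2 ≤ q) (π : Equiv.Perm (Fin q)) (N : ℕ) {y : ℝ}
    (hy : y ∈ Set.Ico (0 : ℝ) 1) (hN : (2 : ℝ)⁻¹ ^ N ≤ rotOdo q π y) :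
    ∃ c : ℤ, rotOdo q π y = y + c / (q * 2 ^ N) := by
  have hq0 : (0 : ℝ) < q := by positivity
  obtain ⟨i, hi⟩ := rot_index hq hy
  obtain ⟨m, h1, h2⟩ := vnk_index (rot_mapsTo hq π hy)
  obtain ⟨-, h4⟩ := vnk_range h1 h2
  have hmN : m < N := by
    by_contra hc
    have := half_pow_anti (not_lt.1 hc)
    have h5 : vnk (rotPerm q π y) = rotOdo q π y := rfl
    linarith
  obtain ⟨d, rfl⟩ := Nat.exists_eq_add_of_lt hmN
  refine ⟨(((π i : ℕ) : ℤ) - ((i : ℕ) : ℤ)) * 2 ^ (m + d + 1) - q * 2 ^ (m + d + 1)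
    + 3 * q * 2 ^ d, ?_⟩
  unfold rotOdo
  rw [vnk_value h1 h2, rot_value hq π hi]
  push_cast
  rw [inv_pow]
  field_simp
  ring

lemma odo_near_zero {q : ℕ} (hq : 2 ≤ q) (π : Equiv.Perm (Fin q)) {x : ℝ}
    (hx : x ∈ Set.Ico (0 : ℝ) 1) (hper : ¬ ∃ n : ℕ, 1 ≤ n ∧ (rotOdo q π)^[n] x = x)
    {ε : ℝ} (hε : 0 < ε) : ∃ k, (rotOdo q π)^[k] x < ε := by
  by_contra! hc
  obtain ⟨N, hN⟩ := exists_pow_lt_of_lt_one hε (show (2 : ℝ)⁻¹ < 1 by norm_num)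
  have hq0 : (0 : ℝ) < q := by positivity
  have hP : (0 : ℝ) < q * 2 ^ N := by positivity
  have hmem : ∀ k, (rotOdo q π)^[k] x ∈ Set.Ico (0 : ℝ) 1 :=
    fun k => (odo_mapsTo hq π).iterate k hx
  have key : ∀ k, ∃ c : ℤ, (rotOdo q π)^[k] x = x + c / (q * 2 ^ N) := by
    intro k
    induction k with
    | zero => exact ⟨0, by simp⟩
    | succ k ih =>
      obtain ⟨c, hcc⟩ := ih
      have h1 := hc (k + 1)
      rw [Function.iterate_succ_apply'] at h1 ⊢
      obtain ⟨d, hd⟩ := odo_step hq π N (hmem k) (by linarith)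
      refine ⟨c + d, ?_⟩
      rw [hd, hcc]
      push_cast
      ring
  choose c hcc using key
  have hb : ∀ k, c k ∈ Set.Icc (-(q * 2 ^ N : ℤ)) (q * 2 ^ N : ℤ) := by
    intro k
    have h1 := hmem k
    rw [hcc k] at h1
    have h2 : (-1 : ℝ) ≤ c k / (q * 2 ^ N) := by linarith [h1.1, hx.2]
    have h3 : (c k : ℝ) / (q * 2 ^ N) ≤ 1 := by linarith [h1.2, hx.1]
    rw [le_div_iff₀ hP] at h2
    rw [div_le_iff₀ hP] at h3
    constructor
    · have : (-(q * 2 ^ N) : ℝ) ≤ c k := by linarith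
      exact_mod_cast this
    · have : (c k : ℝ) ≤ q * 2 ^ N := by linarith
      exact_mod_cast this
  obtain ⟨i, j, hij, he⟩ := (Set.finite_Icc _ _).exists_lt_map_eq_of_forall_mem hb
  have heq : (rotOdo q π)^[i] x = (rotOdo q π)^[j] x := by rw [hcc i, hcc j, he]
  apply hper
  refine ⟨j - i, by omega, ?_⟩
  apply (odo_injOn hq π).iterate (odo_mapsTo hq π) i (hmem _) hx
  rw [← Function.iterate_add_apply, heq]
  congr 2
  omega

/-- `0` is not periodic for `F_π`, and for every non-periodic `x ∈ [0,1)` the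
closure (in `[0,1)`) of the forward orbit of `0` is contained in the closure (in `[0,1)`) of
the forward orbit of `x`: the aperiodic subsystem has a unique minimal subsystem containing `0`. -/
theorem rotOdo_unique_minimal_set (q : ℕ) (hq : 2 ≤ q) (π : Equiv.Perm (Fin q)) :
    (¬ ∃ n : ℕ, 1 ≤ n ∧ (rotOdo q π)^[n] (0 : ℝ) = 0) ∧
    ∀ x ∈ Set.Ico (0 : ℝ) 1, (¬ ∃ n : ℕ, 1 ≤ n ∧ (rotOdo q π)^[n] x = x) →
      closure {y : ℝ | ∃ n : ℕ, y = (rotOdo q π)^[n] (0 : ℝ)} ∩ Set.Ico (0 : ℝ) 1 ⊆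
        closure {y : ℝ | ∃ n : ℕ, y = (rotOdo q π)^[n] x} ∩ Set.Ico (0 : ℝ) 1 := by
  have h0 : (0 : ℝ) ∈ Set.Ico (0 : ℝ) 1 := ⟨le_rfl, one_pos⟩
  constructor
  · rintro ⟨n, hn, h⟩
    obtain ⟨k, rfl⟩ := Nat.exists_eq_add_of_le' hn
    rw [Function.iterate_succ_apply'] at h
    exact (odo_pos hq π ((odo_mapsTo hq π).iterate k h0)).1.ne' h
  · intro x hx hper
    apply Set.inter_subset_inter_left
    apply closure_minimal _ isClosed_closure
    rintro y ⟨n, rfl⟩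
    rw [Metric.mem_closure_iff]
    intro ε hε
    obtain ⟨δ, hδ, h⟩ := odo_iter_right hq π n
    obtain ⟨k, hk⟩ := odo_near_zero hq π hx hper (lt_min hε hδ)
    have hk0 := ((odo_mapsTo hq π).iterate k hx).1
    refine ⟨(rotOdo q π)^[n + k] x, ⟨n + k, rfl⟩, ?_⟩
    rw [Function.iterate_add_apply, h _ hk0 (lt_of_lt_of_le hk (min_le_right _ _)),
      Real.dist_eq, sub_add_cancel_left, abs_neg, abs_of_nonneg hk0]
    exact lt_of_lt_of_le hk (min_le_left _ _)
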